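/- Let H be a well-formed history and let lt assign to each event of H a key (logical time, process identifier) ∈ ℕ × ℕ, where the process identifier component equals the process at which the event occurs, such that distinct events receive distinct keys and, within each process subhistory H|p, the logical-time components are strictly increasing along the subhistory. Let H^lt be the sequence consisting of the same events as H, sorted in increasing lexicographic order of their keys. Then H^lt|p = H|p for every process p; in particular H ≃ H^lt. -/

import Mathlib

/-- An event of a read/write register operation execution: it is either the
invocation (`isInv = true`) or the response (`isInv = false`) of an operation,
identified by an operation identifier `op`, occurring at process `proc`,
targeting register `reg`.  `isRead` tells whether the operation is a read or a
write, and `value` is the value written (for a write) resp. returned (for a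
read). -/
structure Event where
  op : ℕ
  proc : ℕ
  reg : ℕ
  isRead : Bool
  value : ℤ
  isInv : Bool
deriving DecidableEq

/-- A history is a finite sequence of events. -/
abbrev Hist := List Event

/-- `H|p`: the process subhistory of `H`, i.e. the subsequence of events
occurring at process `p`. -/
def procSub (H : Hist) (p : ℕ) : Hist := H.filter (fun e => e.proc = p)

/-- `H|x`: the register subhistory of `H`, i.e. the subsequence of events of
operations targeting register `x`. -/
def regSub (H : Hist) (x : ℕ) : Hist := H.filter (fun e => e.reg = x)

/-- `e2` is the response event matching the invocation event `e1`. -/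
def Matches (e1 e2 : Event) : Prop :=
  e1.isInv = true ∧ e2.isInv = false ∧ e1.op = e2.op ∧ e1.proc = e2.proc ∧
    e1.reg = e2.reg ∧ e1.isRead = e2.isRead ∧ e1.value = e2.value

/-- A history is sequential if its first event is an invocation and every
invocation event (except possibly the last event) is immediately followed by
the matching response event. -/
inductive IsSequential : Hist → Prop
  | nil : IsSequential []
  | single (e : Event) : e.isInv = true → IsSequential [e]
  | cons (e1 e2 : Event) (rest : Hist) :
      Matches e1 e2 → IsSequential rest → IsSequential (e1 :: e2 :: rest)

/-- No two distinct events of a history are the invocation of the same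
operation, nor the response of the same operation. -/
def UniqueEvents (H : Hist) : Prop :=
  H.Pairwise (fun e1 e2 => ¬(e1.op = e2.op ∧ e1.isInv = e2.isInv))

/-- All events of one and the same operation agree on the process, register,
operation type and value. -/
def Coherent (H : Hist) : Prop :=
  ∀ e1 ∈ H, ∀ e2 ∈ H, e1.op = e2.op →
    e1.proc = e2.proc ∧ e1.reg = e2.reg ∧ e1.isRead = e2.isRead ∧ e1.value = e2.value

/-- A history is well-formed if every process subhistory is sequential
(together with the bookkeeping conditions making operations well-defined). -/
def WellFormed (H : Hist) : Prop :=
  UniqueEvents H ∧ Coherent H ∧ ∀ p : ℕ, IsSequential (procSub H p)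

/-- A history is complete if every invocation event has a matching response
event. -/
def Complete (H : Hist) : Prop :=
  ∀ e ∈ H, e.isInv = true → ∃ e' ∈ H, Matches e e'

/-- `H ≃ H'`: two histories are equivalent iff `H|p = H'|p` for every
process `p`. -/
def HEquiv (H H' : Hist) : Prop := ∀ p : ℕ, procSub H p = procSub H' p

/-- Operation `o1` precedes operation `o2` in history `H`
(`o1 <_H o2`): the response event of `o1` occurs before the invocation event
of `o2` in `H`. -/
def OpBefore (H : Hist) (o1 o2 : ℕ) : Prop :=
  ∃ i j : Fin H.length, i < j ∧
    (H.get i).op = o1 ∧ (H.get i).isInv = false ∧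
    (H.get j).op = o2 ∧ (H.get j).isInv = true

/-- A sequential history is legal if every read of a register returns the
value written by the closest preceding write to that register, or the initial
value `0` if no such write exists. -/
def Legal (S : Hist) : Prop :=
  ∀ k : Fin S.length, (S.get k).isInv = true → (S.get k).isRead = true →
    ((∃ j : Fin S.length, j < k ∧ (S.get j).isInv = true ∧ (S.get j).isRead = false ∧
        (S.get j).reg = (S.get k).reg ∧ (S.get j).value = (S.get k).value ∧
        ∀ l : Fin S.length, j < l → l < k → (S.get l).isInv = true →
          (S.get l).isRead = false → (S.get l).reg ≠ (S.get k).reg) ∨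
      ((S.get k).value = 0 ∧
        ∀ j : Fin S.length, j < k → (S.get j).isInv = true →
          (S.get j).isRead = false → (S.get j).reg ≠ (S.get k).reg))

/-- `SC H`: history `H` is sequentially consistent iff there is a legal
sequential history `S` with `S ≃ H`. -/
def SC (H : Hist) : Prop :=
  ∃ S : Hist, IsSequential S ∧ Legal S ∧ HEquiv S H

/-- `LIN H`: history `H` is linearizable iff there is a legal sequential
history `S` with `S ≃ H` such that `o1 <_H o2` implies `o1 <_S o2` for all
operations `o1, o2` of `H`. -/
def LIN (H : Hist) : Prop :=
  ∃ S : Hist, IsSequential S ∧ Legal S ∧ HEquiv S H ∧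
    ∀ o1 o2 : ℕ, OpBefore H o1 o2 → OpBefore S o1 o2

/-- The lexicographic order on keys `(logical time, process identifier)`. -/
def KeyLt (k1 k2 : ℕ × ℕ) : Prop := Prod.Lex (· < ·) (· < ·) k1 k2

/-- `IsLtHistory H lt Hlt`: `Hlt` is the logical-time history `H^lt`
corresponding to `H`, i.e. the sequence consisting of the same events as `H`,
sorted in increasing lexicographic order of their keys
`lt e = (logical time of e, process identifier of e)`. -/
def IsLtHistory (H : Hist) (lt : Event → ℕ × ℕ) (Hlt : Hist) : Prop :=
  Hlt.Perm H ∧ Hlt.Pairwise (fun e1 e2 => KeyLt (lt e1) (lt e2))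

/-- Let `H` be a well-formed history and let `lt` assign to each
event of `H` a key (logical time, process identifier) whose second component
equals the process at which the event occurs, such that distinct events
receive distinct keys and, within each process subhistory `H|p`, the
logical-time components are strictly increasing along the subhistory.  Let
`H^lt` be the sequence consisting of the same events as `H` sorted in
increasing lexicographic order of their keys.  Then `H^lt|p = H|p` for every
process `p`; in particular `H ≃ H^lt`. -/
theorem lt_history_equiv (H : Hist) (hwf : WellFormed H)
    (lt : Event → ℕ × ℕ)
    (hproc : ∀ e ∈ H, (lt e).2 = e.proc)
    (hdist : H.Pairwise (fun e1 e2 => lt e1 ≠ lt e2))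
    (hmono : ∀ p : ℕ, (procSub H p).Pairwise (fun e1 e2 => (lt e1).1 < (lt e2).1))
    (Hlt : Hist) (hlt : IsLtHistory H lt Hlt) :
    (∀ p : ℕ, procSub Hlt p = procSub H p) ∧ HEquiv H Hlt := by
  have key : ∀ p : ℕ, procSub Hlt p = procSub H p := by
    intro p
    obtain ⟨hperm, hsort⟩ := hlt
    have hp : (procSub Hlt p).Perm (procSub H p) := hperm.filter _
    have h1 : (procSub Hlt p).Pairwise (fun e1 e2 => (lt e1).1 < (lt e2).1) := by
      have h2 : (procSub Hlt p).Pairwise (fun e1 e2 => KeyLt (lt e1) (lt e2)) :=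
        hsort.filter _
      refine h2.imp_of_mem ?_
      intro a b ha hb hab
      simp only [procSub, List.mem_filter, decide_eq_true_eq] at ha hb
      have e1 := hproc a (hperm.mem_iff.1 ha.1)
      have e2 := hproc b (hperm.mem_iff.1 hb.1)
      unfold KeyLt at hab
      rw [Prod.lex_def] at hab
      omega
    refine List.Perm.eq_of_pairwise ?_ h1 (hmono p) hp
    intro a b _ _ hab hba
    omega
  exact ⟨key, fun p => (key p).symm⟩
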